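/- For every positive integer r, there exists a strongly connected bridgeless mixed multigraph of radius r such that every orientation of it that is strongly connected has radius at least r² + 3r − 1. -/

import Mathlib

/-- A mixed multigraph: a multigraph whose edges are each either directed
(traversable only from `src` to `dst`) or undirected (traversable both ways).
Parallel edges are allowed since `E` is an abstract edge-index type. -/
structure MixedMultigraph where
  V : Type
  E : Type
  [fintV : Fintype V]
  [fintE : Fintype E]
  src : E → V
  dst : E → V
  directed : E → Bool

attribute [instance] MixedMultigraph.fintV MixedMultigraph.fintE

namespace MixedMultigraph

/-- A dart is a traversal of an edge; an edge may be traversed in reverse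
(`rev = true`) only if it is undirected. -/
structure Dart (G : MixedMultigraph) where
  edge : G.E
  rev : Bool
  ok : rev = true → G.directed edge = false

/-- The starting vertex of a dart. -/
def Dart.fst {G : MixedMultigraph} (d : G.Dart) : G.V :=
  if d.rev then G.dst d.edge else G.src d.edge

/-- The ending vertex of a dart. -/
def Dart.snd {G : MixedMultigraph} (d : G.Dart) : G.V :=
  if d.rev then G.src d.edge else G.dst d.edge

/-- A walk from `u` to `v`: a sequence of darts, consecutive ones sharing endpoints. -/
inductive Walk (G : MixedMultigraph) : G.V → G.V → Type
  | nil (u : G.V) : Walk G u u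
  | cons {w : G.V} (d : G.Dart) (p : Walk G d.snd w) : Walk G d.fst w

namespace Walk

variable {G : MixedMultigraph}

/-- The number of edges of a walk. -/
def length {u v : G.V} : G.Walk u v → ℕ
  | .nil _ => 0
  | .cons _ p => p.length + 1

/-- The list of edges traversed by a walk. -/
def edges {u v : G.V} : G.Walk u v → List G.E
  | .nil _ => []
  | .cons d p => d.edge :: p.edges

/-- The list of darts of a walk. -/
def darts {u v : G.V} : G.Walk u v → List G.Dart
  | .nil _ => []
  | .cons d p => d :: p.darts

/-- The list of vertices visited by a walk (in order, including both ends). -/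
def support {u v : G.V} : G.Walk u v → List G.V
  | .nil u => [u]
  | .cons d p => d.fst :: p.support

/-- A path is a walk with no repeated vertices. -/
def IsPath {u v : G.V} (p : G.Walk u v) : Prop := p.support.Nodup

/-- A cycle is a nonempty closed walk with no repeated edges whose only
repeated vertex is its common first and last vertex. -/
def IsCycle {u : G.V} (p : G.Walk u u) : Prop :=
  0 < p.length ∧ p.edges.Nodup ∧ p.support.tail.Nodup

/-- Two vertices are consecutive on a walk if some dart of the walk joins them. -/
def Consecutive {u v : G.V} (p : G.Walk u v) (x y : G.V) : Prop :=
  ∃ d ∈ p.darts, (d.fst = x ∧ d.snd = y) ∨ (d.fst = y ∧ d.snd = x)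

/-- A chord of a cycle: an edge not on the cycle joining two distinct,
non-consecutive vertices of the cycle. -/
def IsChord {u : G.V} (p : G.Walk u u) (e : G.E) : Prop :=
  e ∉ p.edges ∧ G.src e ∈ p.support ∧ G.dst e ∈ p.support ∧
    G.src e ≠ G.dst e ∧ ¬ p.Consecutive (G.src e) (G.dst e)

end Walk

/-- The distance from `u` to `v`: the least length of a walk from `u` to `v`. -/
noncomputable def dist (G : MixedMultigraph) (u v : G.V) : ℕ :=
  sInf {n | ∃ p : G.Walk u v, p.length = n}

/-- The eccentricity of a vertex `u`. -/
noncomputable def ecc (G : MixedMultigraph) (u : G.V) : ℕ :=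
  sSup {n | ∃ v : G.V, n = max (G.dist u v) (G.dist v u)}

/-- The radius: the minimum eccentricity over all vertices. -/
noncomputable def radius (G : MixedMultigraph) : ℕ :=
  sInf {n | ∃ u : G.V, n = G.ecc u}

/-- The diameter: the maximum distance over all ordered pairs of vertices. -/
noncomputable def diam (G : MixedMultigraph) : ℕ :=
  sSup {n | ∃ u v : G.V, n = G.dist u v}

/-- A mixed multigraph is strongly connected if there is a walk from every
vertex to every other vertex. -/
def StronglyConnected (G : MixedMultigraph) : Prop :=
  ∀ u v : G.V, Nonempty (G.Walk u v)

/-- The mixed multigraph obtained by deleting the edge `e₀`. -/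
noncomputable def deleteEdge (G : MixedMultigraph) (e₀ : G.E) : MixedMultigraph :=
  letI := Classical.decEq G.E
  { V := G.V
    E := {e : G.E // e ≠ e₀}
    fintV := G.fintV
    fintE := inferInstance
    src := fun e => G.src e.1
    dst := fun e => G.dst e.1
    directed := fun e => G.directed e.1 }

/-- A mixed multigraph is bridgeless if it has no bridge. A bridge is an
undirected edge whose removal destroys strong connectivity. -/
def Bridgeless (G : MixedMultigraph) : Prop :=
  ∀ e : G.E, G.directed e = false → (G.deleteEdge e).StronglyConnected

/-- An orientation: each undirected edge is assigned exactly one of its two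
directions (`flip e = true` reverses the stored endpoints); directed edges stay. -/
structure Orientation (G : MixedMultigraph) where
  flip : G.E → Bool
  flip_dir : ∀ e : G.E, G.directed e = true → flip e = false

/-- The digraph resulting from an orientation. -/
def Orientation.graph {G : MixedMultigraph} (o : G.Orientation) : MixedMultigraph :=
  { V := G.V
    E := G.E
    fintV := G.fintV
    fintE := G.fintE
    src := fun e => if o.flip e then G.dst e else G.src e
    dst := fun e => if o.flip e then G.src e else G.dst e
    directed := fun _ => true }

/-- Edge `e` lies on a cycle of length at most `L`. -/
def EdgeOnCycleLE (G : MixedMultigraph) (e : G.E) (L : ℕ) : Prop :=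
  ∃ (u : G.V) (p : G.Walk u u), p.IsCycle ∧ e ∈ p.edges ∧ p.length ≤ L

/-- A mixed multigraph is `k`-chordal if every cycle of length more than `k`
has a chord. -/
def KChordal (G : MixedMultigraph) (k : ℕ) : Prop :=
  ∀ (u : G.V) (p : G.Walk u u), p.IsCycle → k < p.length → ∃ e : G.E, p.IsChord e

/-- The closed neighbourhood `N[u]`: `u` together with all its in-neighbours,
out-neighbours and undirected neighbours. -/
def closedNbhd (G : MixedMultigraph) (u : G.V) : Set G.V :=
  {u} ∪ {v | ∃ e : G.E, (G.src e = u ∧ G.dst e = v) ∨ (G.src e = v ∧ G.dst e = u)}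

/-- A subgraph: a subset of the vertices together with a subset of the edges
having both endpoints in that vertex subset. -/
structure Subgraph (G : MixedMultigraph) where
  verts : Finset G.V
  edges : Finset G.E
  src_mem : ∀ e ∈ edges, G.src e ∈ verts
  dst_mem : ∀ e ∈ edges, G.dst e ∈ verts

/-- A subgraph viewed as a mixed multigraph in its own right. -/
def Subgraph.toGraph {G : MixedMultigraph} (H : G.Subgraph) : MixedMultigraph :=
  { V := {v : G.V // v ∈ H.verts}
    E := {e : G.E // e ∈ H.edges}
    fintV := FinsetCoe.fintype _
    fintE := FinsetCoe.fintype _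
    src := fun e => ⟨G.src e.1, H.src_mem e.1 e.2⟩
    dst := fun e => ⟨G.dst e.1, H.dst_mem e.1 e.2⟩
    directed := fun e => G.directed e.1 }

end MixedMultigraph

/-!
Both the distances from the centre and those to it are bounded below through potentials, functions
that grow by at most one per step. A wheel consists of three copies of a graph whose base points,
the hubs, are joined to a new centre by undirected spokes and to each other, in cyclic order, by
one-way paths of length `2 * k + 1`. In a strongly connected orientation some spoke points towards
the centre, so its hub can only be entered through the preceding hub and is at distance at least
`2 * k + 2` from the centre; dually for distances to the centre. Nesting wheels with
`k = 0, 1, …, r - 1`, the centre has eccentricity `r`, while in every strongly connected orientation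
some vertex is at distance at least `∑ (2 * k + 2) = r ^ 2 + r` from the centre and some vertex at
least that far in the other direction.

On the outermost wheel `k = r - 1`, two cyclically consecutive spokes out of the three have the same
direction. Then one of their hubs is separated from the centre by two paths, at distance `4 * k + 3`
instead of `2 * k + 2`, for a total of `(r - 1) ^ 2 + (r - 1) + (4 * (r - 1) + 3) =
r ^ 2 + 3 * r - 1`. Finally, gluing two nested wheels at their centres makes every vertex at least
as eccentric as the centre of the wheel it does not lie in.
-/

namespace MixedMultigraph

variable {G H : MixedMultigraph}

/-! ### Walks, distance, eccentricity and radius -/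

/-- `G.Adj x y`: some edge of `G` can be traversed from `x` to `y`. -/
def Adj (G : MixedMultigraph) (x y : G.V) : Prop := ∃ d : G.Dart, d.fst = x ∧ d.snd = y

theorem adj_src_dst (e : G.E) : G.Adj (G.src e) (G.dst e) :=
  ⟨⟨e, false, by simp⟩, rfl, rfl⟩

theorem adj_dst_src {e : G.E} (he : G.directed e = false) : G.Adj (G.dst e) (G.src e) :=
  ⟨⟨e, true, fun _ => he⟩, rfl, rfl⟩

theorem adj_iff {x y : G.V} : G.Adj x y ↔ ∃ e, (G.src e = x ∧ G.dst e = y) ∨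
    (G.directed e = false ∧ G.dst e = x ∧ G.src e = y) := by
  constructor
  · rintro ⟨⟨e, _ | _, ok⟩, hx, hy⟩
    · exact ⟨e, .inl ⟨hx, hy⟩⟩
    · exact ⟨e, .inr ⟨ok rfl, hx, hy⟩⟩
  · rintro ⟨e, ⟨rfl, rfl⟩ | ⟨he, rfl, rfl⟩⟩
    · exact adj_src_dst e
    · exact adj_dst_src he

/-- Concatenation of walks. -/
def Walk.append {u v w : G.V} : G.Walk u v → G.Walk v w → G.Walk u w
  | .nil _, q => q
  | .cons d p, q => .cons d (p.append q)

theorem Walk.length_append {u v w : G.V} (p : G.Walk u v) (q : G.Walk v w) :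
    (p.append q).length = p.length + q.length := by
  induction p with
  | nil => simp [append, length]
  | cons d _ ih => simp only [append, length, ih]; omega

/-- `G.Reachable u v`: there is a walk from `u` to `v`. -/
def Reachable (G : MixedMultigraph) (u v : G.V) : Prop := Nonempty (G.Walk u v)

theorem Reachable.refl (u : G.V) : G.Reachable u u := ⟨.nil u⟩

theorem Reachable.trans {u v w : G.V} : G.Reachable u v → G.Reachable v w → G.Reachable u w
  | ⟨p⟩, ⟨q⟩ => ⟨p.append q⟩

theorem Adj.reachable {u v : G.V} : G.Adj u v → G.Reachable u v
  | ⟨d, hu, hv⟩ => hu ▸ hv ▸ ⟨.cons d (.nil _)⟩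

theorem dist_le_length {u v : G.V} (p : G.Walk u v) : G.dist u v ≤ p.length :=
  Nat.sInf_le ⟨p, rfl⟩

theorem StronglyConnected.exists_length_eq_dist (hG : G.StronglyConnected) (u v : G.V) :
    ∃ p : G.Walk u v, p.length = G.dist u v :=
  let ⟨p⟩ := hG u v
  Nat.sInf_mem (s := {n | ∃ p : G.Walk u v, p.length = n}) ⟨_, p, rfl⟩

theorem dist_self (u : G.V) : G.dist u u = 0 :=
  Nat.le_zero.mp (dist_le_length (.nil u))

theorem Adj.dist_le_one {u v : G.V} : G.Adj u v → G.dist u v ≤ 1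
  | ⟨d, hu, hv⟩ => hu ▸ hv ▸ dist_le_length (.cons d (.nil _))

theorem StronglyConnected.dist_triangle (hG : G.StronglyConnected) (u v w : G.V) :
    G.dist u w ≤ G.dist u v + G.dist v w := by
  obtain ⟨p, hp⟩ := hG.exists_length_eq_dist u v
  obtain ⟨q, hq⟩ := hG.exists_length_eq_dist v w
  rw [← hp, ← hq, ← p.length_append]
  exact dist_le_length _

theorem max_dist_le_ecc (u v : G.V) : max (G.dist u v) (G.dist v u) ≤ G.ecc u := by
  have hfinite : {n | ∃ v, n = max (G.dist u v) (G.dist v u)}.Finite :=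
    (Set.finite_range fun v => max (G.dist u v) (G.dist v u)).subset
      (by rintro _ ⟨v, rfl⟩; exact ⟨v, rfl⟩)
  exact le_csSup hfinite.bddAbove ⟨v, rfl⟩

theorem dist_le_ecc (u v : G.V) : G.dist u v ≤ G.ecc u :=
  (le_max_left _ _).trans (max_dist_le_ecc u v)

theorem dist_le_ecc' (u v : G.V) : G.dist v u ≤ G.ecc u :=
  (le_max_right _ _).trans (max_dist_le_ecc u v)

theorem ecc_le {u : G.V} {n : ℕ} (h : ∀ v, G.dist u v ≤ n ∧ G.dist v u ≤ n) : G.ecc u ≤ n :=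
  csSup_le ⟨_, u, rfl⟩ (by rintro _ ⟨v, rfl⟩; exact max_le (h v).1 (h v).2)

theorem radius_le_ecc (u : G.V) : G.radius ≤ G.ecc u :=
  Nat.sInf_le ⟨u, rfl⟩

theorem le_radius [Nonempty G.V] {n : ℕ} (h : ∀ u, n ≤ G.ecc u) : n ≤ G.radius :=
  le_csInf ⟨_, Classical.arbitrary G.V, rfl⟩ (by rintro _ ⟨u, rfl⟩; exact h u)

/-! ### Potentials -/

/-- A potential on `G`: an integer-valued function that increases by at most one along each step
of a walk, and hence bounds distances from below. -/
def IsPotential (G : MixedMultigraph) (φ : G.V → ℤ) : Prop :=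
  ∀ ⦃x y⦄, G.Adj x y → φ y ≤ φ x + 1

theorem isPotential_iff {φ : G.V → ℤ} : G.IsPotential φ ↔
    ∀ e, φ (G.dst e) ≤ φ (G.src e) + 1 ∧
      (G.directed e = false → φ (G.src e) ≤ φ (G.dst e) + 1) := by
  constructor
  · exact fun h e => ⟨h (adj_src_dst e), fun he => h (adj_dst_src he)⟩
  · intro h x y hxy
    obtain ⟨e, ⟨rfl, rfl⟩ | ⟨he, rfl, rfl⟩⟩ := adj_iff.mp hxy
    · exact (h e).1
    · exact (h e).2 he

theorem IsPotential.le_add_length {φ : G.V → ℤ} (hφ : G.IsPotential φ) {u v : G.V}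
    (p : G.Walk u v) : φ v ≤ φ u + p.length := by
  induction p with
  | nil => simp [Walk.length]
  | cons d p ih =>
    have hstep : φ d.snd ≤ φ d.fst + 1 := hφ ⟨d, rfl, rfl⟩
    simp only [Walk.length, Nat.cast_add, Nat.cast_one]
    omega

theorem IsPotential.le_add_dist {φ : G.V → ℤ} (hφ : G.IsPotential φ) (hG : G.StronglyConnected)
    (u v : G.V) : φ v ≤ φ u + G.dist u v := by
  obtain ⟨p, hp⟩ := hG.exists_length_eq_dist u v
  exact hp ▸ hφ.le_add_length p

theorem StronglyConnected.isPotential_dist_from (hG : G.StronglyConnected) (c : G.V) :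
    G.IsPotential fun v => G.dist c v := fun x y hxy => by
  have htriangle := hG.dist_triangle c x y
  have hstep := hxy.dist_le_one
  beta_reduce
  omega

theorem StronglyConnected.isPotential_neg_dist_to (hG : G.StronglyConnected) (c : G.V) :
    G.IsPotential fun v => -(G.dist v c : ℤ) := fun x y hxy => by
  have htriangle := hG.dist_triangle x y c
  have hstep := hxy.dist_le_one
  beta_reduce
  omega

theorem Orientation.isPotential_graph_iff (o : G.Orientation) {φ : G.V → ℤ} :
    o.graph.IsPotential φ ↔ ∀ e, (o.flip e = false → φ (G.dst e) ≤ φ (G.src e) + 1) ∧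
      (o.flip e = true → φ (G.src e) ≤ φ (G.dst e) + 1) := by
  refine isPotential_iff.trans (forall_congr' fun e => ?_)
  cases h : o.flip e <;> simp [Orientation.graph, h]

/-! ### Homomorphisms and retractions -/

/-- A map of vertices sending every step of a walk in `G` to a step in `H` or to a single vertex. -/
def IsWeakHom (G H : MixedMultigraph) (f : G.V → H.V) : Prop :=
  ∀ ⦃x y⦄, G.Adj x y → f x = f y ∨ H.Adj (f x) (f y)

namespace IsWeakHom

variable {f : G.V → H.V}

theorem exists_walk_length_le (hf : IsWeakHom G H f) {u v : G.V} (p : G.Walk u v) :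
    ∃ q : H.Walk (f u) (f v), q.length ≤ p.length := by
  induction p with
  | nil u => exact ⟨.nil _, le_rfl⟩
  | cons d p ih =>
    have hstep : f d.fst = f d.snd ∨ H.Adj (f d.fst) (f d.snd) := hf ⟨d, rfl, rfl⟩
    obtain heq | ⟨d', hfst, hsnd⟩ := hstep
    · rw [heq]
      obtain ⟨q, hq⟩ := ih
      exact ⟨q, hq.trans (Nat.le_succ _)⟩
    · rw [← hsnd] at ih
      obtain ⟨q, hq⟩ := ih
      rw [← hfst]
      exact ⟨.cons d' q, Nat.succ_le_succ hq⟩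

theorem reachable (hf : IsWeakHom G H f) {u v : G.V} :
    G.Reachable u v → H.Reachable (f u) (f v)
  | ⟨p⟩ => let ⟨q, _⟩ := hf.exists_walk_length_le p; ⟨q⟩

theorem dist_le (hf : IsWeakHom G H f) (hG : G.StronglyConnected) (u v : G.V) :
    H.dist (f u) (f v) ≤ G.dist u v := by
  obtain ⟨p, hp⟩ := hG.exists_length_eq_dist u v
  obtain ⟨q, hq⟩ := hf.exists_walk_length_le p
  exact (dist_le_length q).trans (hq.trans hp.le)

theorem stronglyConnected (hf : IsWeakHom G H f) (hsurj : f.Surjective)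
    (hG : G.StronglyConnected) : H.StronglyConnected :=
  hsurj.forall₂.mpr fun u v => hf.reachable (hG u v)

theorem ecc_le (hf : IsWeakHom G H f) (hsurj : f.Surjective) (hG : G.StronglyConnected)
    (u : G.V) : H.ecc (f u) ≤ G.ecc u :=
  MixedMultigraph.ecc_le <| hsurj.forall.mpr fun v =>
    ⟨(hf.dist_le hG u v).trans (dist_le_ecc u v), (hf.dist_le hG v u).trans (dist_le_ecc' u v)⟩

end IsWeakHom

/-- A homomorphism of mixed multigraphs, given on vertices and on edges. -/
structure Hom (G H : MixedMultigraph) where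
  vert : G.V → H.V
  edge : G.E → H.E
  src_edge : ∀ e, H.src (edge e) = vert (G.src e)
  dst_edge : ∀ e, H.dst (edge e) = vert (G.dst e)
  directed_edge : ∀ e, H.directed (edge e) = G.directed e

theorem Hom.isWeakHom (f : Hom G H) : IsWeakHom G H f.vert := by
  intro x y hxy
  obtain ⟨e, ⟨rfl, rfl⟩ | ⟨he, rfl, rfl⟩⟩ := adj_iff.mp hxy <;>
    rw [← f.src_edge, ← f.dst_edge]
  · exact .inr (adj_src_dst _)
  · exact .inr (adj_dst_src ((f.directed_edge e).trans he))

/-- The homomorphism `f`, with an edge outside its range deleted from the target. -/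
def Hom.codDeleteEdge (f : Hom G H) {e₀ : H.E} (he₀ : ∀ e, f.edge e ≠ e₀) :
    Hom G (H.deleteEdge e₀) where
  vert := f.vert
  edge e := ⟨f.edge e, he₀ e⟩
  src_edge := f.src_edge
  dst_edge := f.dst_edge
  directed_edge := f.directed_edge

/-- The homomorphism `f`, with an edge deleted from the source and its image from the target. -/
def Hom.mapDeleteEdge (f : Hom G H) (hf : f.edge.Injective) (e₀ : G.E) :
    Hom (G.deleteEdge e₀) (H.deleteEdge (f.edge e₀)) where
  vert := f.vert
  edge e := ⟨f.edge e.1, fun h => e.2 (hf h)⟩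
  src_edge e := f.src_edge e.1
  dst_edge e := f.dst_edge e.1
  directed_edge e := f.directed_edge e.1

theorem Hom.reachable_deleteEdge (f : Hom G H) (hf : f.edge.Injective)
    (hG : G.StronglyConnected) (hbridgeless : G.Bridgeless) {e₀ : H.E}
    (he₀ : H.directed e₀ = false) (u v : G.V) :
    (H.deleteEdge e₀).Reachable (f.vert u) (f.vert v) := by
  by_cases hrange : ∃ e, f.edge e = e₀
  · obtain ⟨e, rfl⟩ := hrange
    exact (f.mapDeleteEdge hf e).isWeakHom.reachable
      (hbridgeless e ((f.directed_edge e).symm.trans he₀) u v)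
  · exact (f.codDeleteEdge (not_exists.mp hrange)).isWeakHom.reachable (hG u v)

theorem adj_deleteEdge_src_dst {e e₀ : G.E} (he : e ≠ e₀) :
    (G.deleteEdge e₀).Adj (G.src e) (G.dst e) :=
  adj_src_dst (G := G.deleteEdge e₀) ⟨e, he⟩

theorem adj_deleteEdge_dst_src {e e₀ : G.E} (he : e ≠ e₀) (hdir : G.directed e = false) :
    (G.deleteEdge e₀).Adj (G.dst e) (G.src e) :=
  adj_dst_src (G := G.deleteEdge e₀) (e := ⟨e, he⟩) hdir

/-- The orientation of `G` induced by an orientation of `H` along a homomorphism `G → H`. -/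
def Orientation.comap (o : H.Orientation) (f : Hom G H) : G.Orientation where
  flip e := o.flip (f.edge e)
  flip_dir e he := o.flip_dir _ ((f.directed_edge e).trans he)

/-- The homomorphism `f`, regarded as a homomorphism of oriented graphs. -/
def Hom.orient (f : Hom G H) (o : H.Orientation) : Hom (o.comap f).graph o.graph where
  vert := f.vert
  edge := f.edge
  src_edge e := by
    dsimp only [Orientation.graph, Orientation.comap]
    split_ifs
    exacts [f.dst_edge e, f.src_edge e]
  dst_edge e := by
    dsimp only [Orientation.graph, Orientation.comap]
    split_ifs
    exacts [f.src_edge e, f.dst_edge e]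
  directed_edge _ := rfl

/-- `ρ` is a left inverse of `f` on vertices that contracts every edge outside the image of `f`. -/
structure Hom.IsRetraction (f : Hom G H) (ρ : H.V → G.V) : Prop where
  apply_vert : ∀ v, ρ (f.vert v) = v
  contract : ∀ e ∉ Set.range f.edge, ρ (H.src e) = ρ (H.dst e)

namespace Hom.IsRetraction

variable {f : Hom G H} {ρ : H.V → G.V}

theorem surjective (hρ : f.IsRetraction ρ) : ρ.Surjective :=
  fun v => ⟨f.vert v, hρ.apply_vert v⟩

theorem isWeakHom (hρ : f.IsRetraction ρ) : IsWeakHom H G ρ := by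
  intro x y hxy
  obtain ⟨e, he⟩ := adj_iff.mp hxy
  by_cases hrange : e ∈ Set.range f.edge
  · obtain ⟨e, rfl⟩ := hrange
    simp only [f.src_edge, f.dst_edge, f.directed_edge] at he
    obtain ⟨rfl, rfl⟩ | ⟨hdir, rfl, rfl⟩ := he <;> simp only [hρ.apply_vert]
    · exact .inr (adj_src_dst e)
    · exact .inr (adj_dst_src hdir)
  · have := hρ.contract e hrange
    obtain ⟨rfl, rfl⟩ | ⟨-, rfl, rfl⟩ := he
    · exact .inl this
    · exact .inl this.symm

theorem orient (hρ : f.IsRetraction ρ) (o : H.Orientation) : (f.orient o).IsRetraction ρ where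
  apply_vert := hρ.apply_vert
  contract e he := by
    have := hρ.contract e he
    simp only [Orientation.graph]
    split_ifs
    · exact this.symm
    · exact this

theorem stronglyConnected_comap (hρ : f.IsRetraction ρ) {o : H.Orientation}
    (ho : o.graph.StronglyConnected) : (o.comap f).graph.StronglyConnected :=
  (hρ.orient o).isWeakHom.stronglyConnected hρ.surjective ho

end Hom.IsRetraction

/-! ### Bouquets: copies of a graph glued at a base vertex -/

section Bouquet

variable (ι : Type) (c : G.V)

open Classical in
/-- The inclusion of `G` as the `i`-th petal of the vertex set of `bouquet ι c`; every copy of `c`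
is sent to the base vertex `none`. -/
noncomputable def petalVertex (i : ι) (v : G.V) : Option (ι × {v : G.V // v ≠ c}) :=
  if h : v = c then none else some (i, ⟨v, h⟩)

open Classical in
/-- The bouquet of copies of `G` indexed by `ι`, with all copies of `c` identified to the
vertex `none`. -/
noncomputable def bouquet [Fintype ι] : MixedMultigraph where
  V := Option (ι × {v : G.V // v ≠ c})
  E := ι × G.E
  src e := petalVertex ι c e.1 (G.src e.2)
  dst e := petalVertex ι c e.1 (G.dst e.2)
  directed e := G.directed e.2

/-- The inclusion of the `i`-th petal. -/
noncomputable def petal [Fintype ι] (i : ι) : Hom G (bouquet ι c) where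
  vert := petalVertex ι c i
  edge e := (i, e)
  src_edge _ := rfl
  dst_edge _ := rfl
  directed_edge _ := rfl

open Classical in
/-- The map collapsing every petal except the `i`-th one to the base vertex. -/
noncomputable def petalRetract (i : ι) : Option (ι × {v : G.V // v ≠ c}) → G.V
  | none => c
  | some (j, v) => if j = i then v else c

variable {ι c}

theorem petalVertex_base (i : ι) : petalVertex ι c i c = none := by
  simp [petalVertex]

theorem exists_petalVertex_eq [Nonempty ι] (x : Option (ι × {v : G.V // v ≠ c})) :
    ∃ i v, petalVertex ι c i v = x := by
  match x with
  | none => exact ⟨Classical.arbitrary ι, c, petalVertex_base _⟩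
  | some (i, ⟨v, hv⟩) => exact ⟨i, v, by simp [petalVertex, hv]⟩

theorem petalRetract_petalVertex_self (i : ι) (v : G.V) :
    petalRetract ι c i (petalVertex ι c i v) = v := by
  by_cases hv : v = c <;> simp [petalVertex, petalRetract, hv]

theorem petalRetract_petalVertex_of_ne {i j : ι} (hij : j ≠ i) (v : G.V) :
    petalRetract ι c i (petalVertex ι c j v) = c := by
  by_cases hv : v = c <;> simp [petalVertex, petalRetract, hv, hij]

theorem exists_petalRetract_eq_base [Nontrivial ι] (x : Option (ι × {v : G.V // v ≠ c})) :
    ∃ i, petalRetract ι c i x = c := by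
  obtain ⟨j, v, rfl⟩ := exists_petalVertex_eq x
  obtain ⟨i, hij⟩ := exists_ne j
  exact ⟨i, petalRetract_petalVertex_of_ne hij.symm v⟩

variable [Fintype ι]

theorem isRetraction_petalRetract (i : ι) : (petal ι c i).IsRetraction (petalRetract ι c i) where
  apply_vert := petalRetract_petalVertex_self i
  contract := by
    rintro ⟨j, e⟩ he
    have hji : j ≠ i := fun h => he ⟨e, h ▸ rfl⟩
    exact (petalRetract_petalVertex_of_ne hji _).trans (petalRetract_petalVertex_of_ne hji _).symm

theorem forall_rel_bouquet [Nonempty ι] {R : (bouquet ι c).V → (bouquet ι c).V → Prop}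
    (htrans : ∀ {x y z}, R x y → R y z → R x z)
    (hpetal : ∀ i u v, R ((petal ι c i).vert u) ((petal ι c i).vert v)) (x y) : R x y := by
  obtain ⟨i, u, rfl⟩ := exists_petalVertex_eq x
  obtain ⟨j, v, rfl⟩ := exists_petalVertex_eq y
  have hto := hpetal i u c
  have hfrom := hpetal j c v
  simp only [petal, petalVertex_base] at hto hfrom
  exact htrans hto hfrom

theorem stronglyConnected_bouquet [Nonempty ι] (hG : G.StronglyConnected) :
    (bouquet ι c).StronglyConnected :=
  forall_rel_bouquet (R := (bouquet ι c).Reachable) .trans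
    fun i u v => (petal ι c i).isWeakHom.reachable (hG u v)

theorem bridgeless_bouquet [Nonempty ι] (hG : G.StronglyConnected) (hbridgeless : G.Bridgeless) :
    (bouquet ι c).Bridgeless := fun e₀ he₀ =>
  forall_rel_bouquet (R := ((bouquet ι c).deleteEdge e₀).Reachable) .trans
    fun i u v => (petal ι c i).reachable_deleteEdge (Prod.mk_right_injective i) hG hbridgeless
      he₀ u v

theorem ecc_bouquet_base_le [Nonempty ι] (hG : G.StronglyConnected) :
    (bouquet ι c).ecc none ≤ G.ecc c := by
  refine ecc_le fun x => ?_
  obtain ⟨i, v, rfl⟩ := exists_petalVertex_eq x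
  have hdist := (petal ι c i).isWeakHom.dist_le hG
  rw [← petalVertex_base i]
  exact ⟨(hdist c v).trans (dist_le_ecc c v), (hdist v c).trans (dist_le_ecc' c v)⟩

-- Every vertex lies outside some petal, and the retraction onto that petal sends it to `c`.
theorem radius_bouquet [Nontrivial ι] (hG : G.StronglyConnected) :
    (bouquet ι c).radius = G.ecc c := by
  have : Nonempty (bouquet ι c).V := ⟨none⟩
  refine le_antisymm ((radius_le_ecc _).trans (ecc_bouquet_base_le hG)) (le_radius fun x => ?_)
  obtain ⟨i, hi⟩ := exists_petalRetract_eq_base x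
  have hρ := isRetraction_petalRetract (c := c) i
  have hecc := hρ.isWeakHom.ecc_le hρ.surjective (stronglyConnected_bouquet hG) x
  rwa [hi] at hecc

theorem le_radius_orientation_bouquet [Nontrivial ι] {o : (bouquet ι c).Orientation}
    (ho : o.graph.StronglyConnected) {n : ℕ}
    (hn : ∀ i, n ≤ (o.comap (petal ι c i)).graph.ecc c) : n ≤ o.graph.radius := by
  have : Nonempty o.graph.V := ⟨(none : (bouquet ι c).V)⟩
  refine le_radius fun x => ?_
  obtain ⟨i, hi⟩ := exists_petalRetract_eq_base x
  have hρ := (isRetraction_petalRetract i).orient o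
  have hecc := hρ.isWeakHom.ecc_le hρ.surjective ho x
  rw [hi] at hecc
  exact (hn i).trans hecc

end Bouquet

/-! ### Wheels -/

/-- The vertices of `wheel c k`: the centre, three copies of the vertex set `V`, and for each copy
two arms of `k` further vertices, the outgoing one (`true`) and the incoming one (`false`). -/
inductive WheelVertex (V : Type) (k : ℕ)
  | center
  | copy (i : Fin 3) (v : V)
  | arm (i : Fin 3) (outgoing : Bool) (j : Fin k)
  deriving Fintype

/-- The edges of `wheel c k`. An arm consists of antiparallel pairs of directed edges;
`away` tells the edge pointing away from the hub from the one pointing towards it. -/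
inductive WheelEdge (E : Type) (k : ℕ)
  | copy (i : Fin 3) (e : E)
  | spoke (i : Fin 3)
  | arm (i : Fin 3) (outgoing away : Bool) (j : Fin k)
  | link (i : Fin 3)
  deriving Fintype

section Wheel

variable (c : G.V) (k : ℕ)

/-- The vertex at distance `j` from the hub `copy i c` along an arm; `j = 0` is the hub. -/
def armVertex (i : Fin 3) (outgoing : Bool) : Fin (k + 1) → WheelVertex G.V k :=
  Fin.cases (.copy i c) (.arm i outgoing)

/-- Three copies of `G`, whose hubs (the copies of `c`) are joined to a new centre by undirected
spokes and in cyclic order by paths of length `2 * k + 1`. The path from the `i`-th hub to the next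
one consists of the outgoing arm of the former, the directed edge `link i`, and the incoming arm of
the latter; it can be traversed backwards except along `link i`. -/
def wheel : MixedMultigraph where
  V := WheelVertex G.V k
  E := WheelEdge G.E k
  src
    | .copy i e => .copy i (G.src e)
    | .spoke _ => .center
    | .arm i s true j => armVertex c k i s j.castSucc
    | .arm i s false j => armVertex c k i s j.succ
    | .link i => armVertex c k i true (Fin.last k)
  dst
    | .copy i e => .copy i (G.dst e)
    | .spoke i => .copy i c
    | .arm i s true j => armVertex c k i s j.succ
    | .arm i s false j => armVertex c k i s j.castSucc
    | .link i => armVertex c k (i + 1) false (Fin.last k)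
  directed
    | .copy _ e => G.directed e
    | .spoke _ => false
    | .arm .. => true
    | .link _ => true

/-- The inclusion of the `i`-th copy of `G` into the wheel. -/
def wheelCopy (i : Fin 3) : Hom G (wheel c k) where
  vert := .copy i
  edge := .copy i
  src_edge _ := rfl
  dst_edge _ := rfl
  directed_edge _ := rfl

/-- The map collapsing everything except the `i`-th copy of `G` to `c`. -/
def wheelRetract (i : Fin 3) : WheelVertex G.V k → G.V
  | .copy j v => if j = i then v else c
  | _ => c

variable {c k}

theorem wheelRetract_armVertex (i j : Fin 3) (s : Bool) (m : Fin (k + 1)) :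
    wheelRetract c k i (armVertex c k j s m) = c := by
  cases m using Fin.cases <;> simp [armVertex, wheelRetract]

theorem isRetraction_wheelRetract (i : Fin 3) :
    (wheelCopy c k i).IsRetraction (wheelRetract c k i) where
  apply_vert v := if_pos rfl
  contract e he := by
    match e with
    | .copy j e =>
      have hji : j ≠ i := fun h => he ⟨e, h ▸ rfl⟩
      simp [wheel, wheelRetract, hji]
    | .spoke j => simp [wheel, wheelRetract]
    | .arm j s true m | .arm j s false m | .link j => simp [wheel, wheelRetract_armVertex]

section Connectivity

variable {R : WheelVertex G.V k → WheelVertex G.V k → Prop}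

theorem rel_hub_armVertex (hrefl : ∀ x, R x x) (htrans : ∀ {x y z}, R x y → R y z → R x z)
    {i : Fin 3} {s : Bool}
    (harm : ∀ j : Fin k, R (armVertex c k i s j.castSucc) (armVertex c k i s j.succ) ∧
      R (armVertex c k i s j.succ) (armVertex c k i s j.castSucc)) (m : Fin (k + 1)) :
    R (.copy i c) (armVertex c k i s m) ∧ R (armVertex c k i s m) (.copy i c) := by
  induction m using Fin.induction with
  | zero => exact ⟨hrefl _, hrefl _⟩
  | succ j ih => exact ⟨htrans ih.1 (harm j).1, htrans (harm j).2 ih.2⟩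

-- Going once around the ring makes up for one missing spoke.
theorem forall_rel_wheel (hrefl : ∀ x, R x x) (htrans : ∀ {x y z}, R x y → R y z → R x z)
    (hcopy : ∀ i u v, R (.copy i u) (.copy i v))
    (harm : ∀ i s (j : Fin k), R (armVertex c k i s j.castSucc) (armVertex c k i s j.succ) ∧
      R (armVertex c k i s j.succ) (armVertex c k i s j.castSucc))
    (hlink : ∀ i, R (armVertex c k i true (Fin.last k)) (armVertex c k (i + 1) false (Fin.last k)))
    (i₀ : Fin 3) (hspoke : ∀ i ≠ i₀, R .center (.copy i c) ∧ R (.copy i c) .center) (x y) :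
    R x y := by
  have hhub_arm i s := rel_hub_armVertex hrefl htrans (harm i s)
  have hnext i : R (.copy i c) (.copy (i + 1) c) :=
    htrans (hhub_arm i true _).1 (htrans (hlink i) (hhub_arm (i + 1) false _).2)
  have hcenter_hub i : R .center (.copy i c) ∧ R (.copy i c) .center := by
    by_cases hi : i = i₀
    · subst hi
      have hprev := hnext (i - 1)
      rw [sub_add_cancel] at hprev
      exact ⟨htrans (hspoke (i - 1) (by simp)).1 hprev,
        htrans (hnext i) (hspoke (i + 1) (by simp)).2⟩
    · exact hspoke i hi
  have hcenter x : R .center x ∧ R x .center := by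
    match x with
    | .center => exact ⟨hrefl _, hrefl _⟩
    | .copy i v =>
      exact ⟨htrans (hcenter_hub i).1 (hcopy i c v), htrans (hcopy i v c) (hcenter_hub i).2⟩
    | .arm i s j =>
      exact ⟨htrans (hcenter_hub i).1 (hhub_arm i s j.succ).1,
        htrans (hhub_arm i s j.succ).2 (hcenter_hub i).2⟩
  exact htrans (hcenter x).2 (hcenter y).1

end Connectivity

theorem stronglyConnected_wheel (hG : G.StronglyConnected) : (wheel c k).StronglyConnected := by
  refine forall_rel_wheel (c := c) (R := (wheel c k).Reachable)
    (Reachable.refl (G := wheel c k)) .trans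
    (fun i u v => (wheelCopy c k i).isWeakHom.reachable (hG u v))
    (fun i s j => ⟨?_, ?_⟩) (fun i => ?_) 0 (fun i _ => ⟨?_, ?_⟩)
  · exact (adj_src_dst (G := wheel c k) (.arm i s true j)).reachable
  · exact (adj_src_dst (G := wheel c k) (.arm i s false j)).reachable
  · exact (adj_src_dst (G := wheel c k) (.link i)).reachable
  · exact (adj_src_dst (G := wheel c k) (.spoke i)).reachable
  · exact (adj_dst_src (G := wheel c k) (e := .spoke i) rfl).reachable

theorem bridgeless_wheel (hG : G.StronglyConnected) (hbridgeless : G.Bridgeless) :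
    (wheel c k).Bridgeless := by
  intro e₀ he₀
  obtain ⟨i₀, hi₀⟩ : ∃ i₀, ∀ i ≠ i₀, WheelEdge.spoke i ≠ e₀ := by
    cases e₀ with
    | spoke i₀ => exact ⟨i₀, by simp⟩
    | _ => exact ⟨0, by simp⟩
  have hdirected (e : (wheel c k).E) (he : (wheel c k).directed e = true) :
      ((wheel c k).deleteEdge e₀).Reachable ((wheel c k).src e) ((wheel c k).dst e) :=
    (adj_deleteEdge_src_dst fun h => by simp [← h, he] at he₀).reachable
  refine forall_rel_wheel (c := c) (R := ((wheel c k).deleteEdge e₀).Reachable)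
    (Reachable.refl (G := (wheel c k).deleteEdge e₀)) .trans
    (fun i u v => (wheelCopy c k i).reachable_deleteEdge (fun _ _ h => WheelEdge.copy.inj h |>.2)
      hG hbridgeless he₀ u v)
    (fun i s j => ⟨?_, ?_⟩) (fun i => ?_) i₀ (fun i hi => ⟨?_, ?_⟩)
  · exact hdirected (.arm i s true j) rfl
  · exact hdirected (.arm i s false j) rfl
  · exact hdirected (.link i) rfl
  · exact (adj_deleteEdge_src_dst (G := wheel c k) (hi₀ i hi)).reachable
  · exact (adj_deleteEdge_dst_src (G := wheel c k) (hi₀ i hi) rfl).reachable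

theorem dist_center_armVertex_le (hG : G.StronglyConnected) (i : Fin 3) (s : Bool)
    (m : Fin (k + 1)) : (wheel c k).dist .center (armVertex c k i s m) ≤ m + 1 ∧
      (wheel c k).dist (armVertex c k i s m) .center ≤ m + 1 := by
  have htriangle := (stronglyConnected_wheel (c := c) (k := k) hG).dist_triangle
  induction m using Fin.induction with
  | zero =>
    exact ⟨(adj_src_dst (G := wheel c k) (.spoke i)).dist_le_one,
      (adj_dst_src (G := wheel c k) (e := .spoke i) rfl).dist_le_one⟩
  | succ j ih =>
    have haway := (adj_src_dst (G := wheel c k) (.arm i s true j)).dist_le_one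
    have htowards := (adj_src_dst (G := wheel c k) (.arm i s false j)).dist_le_one
    simp only [Fin.val_succ, Fin.val_castSucc] at ih ⊢
    exact ⟨(htriangle _ _ _).trans (add_le_add ih.1 haway),
      (htriangle _ _ _).trans ((add_le_add htowards ih.2).trans (by omega))⟩

theorem ecc_wheel_center_le (hG : G.StronglyConnected) (hc : G.ecc c ≤ k) :
    (wheel c k).ecc .center ≤ k + 1 := by
  have htriangle := (stronglyConnected_wheel (c := c) (k := k) hG).dist_triangle
  refine ecc_le fun x => ?_
  match x with
  | .center =>
    have hself : (wheel c k).dist .center .center ≤ k + 1 := (dist_self _).trans_le (Nat.zero_le _)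
    exact ⟨hself, hself⟩
  | .copy i v =>
    have hout := (adj_src_dst (G := wheel c k) (.spoke i)).dist_le_one
    have hin := (adj_dst_src (G := wheel c k) (e := .spoke i) rfl).dist_le_one
    have hcopy := (wheelCopy c k i).isWeakHom.dist_le hG
    have hto := (hcopy c v).trans (dist_le_ecc c v)
    have hfrom := (hcopy v c).trans (dist_le_ecc' c v)
    exact ⟨(htriangle _ _ _).trans ((add_le_add hout hto).trans (by omega)),
      (htriangle _ _ _).trans ((add_le_add hfrom hin).trans (by omega))⟩
  | .arm i s j =>
    have harm := dist_center_armVertex_le (c := c) hG i s j.succ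
    have hj : (j.succ : ℕ) + 1 ≤ k + 1 := by simp
    exact ⟨harm.1.trans hj, harm.2.trans hj⟩

/-- A lower bound for the distance from the centre, exact on the hubs and on the arms. -/
def wheelDepth : WheelVertex G.V k → ℤ
  | .center => 0
  | .copy _ _ => 1
  | .arm _ _ j => j + 2

theorem wheelDepth_armVertex (i : Fin 3) (s : Bool) (m : Fin (k + 1)) :
    wheelDepth (armVertex c k i s m) = m + 1 := by
  cases m using Fin.cases with
  | zero => simp [armVertex, wheelDepth]
  | succ j =>
    simp only [armVertex, Fin.cases_succ, wheelDepth, Fin.val_succ]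
    omega

theorem isPotential_wheelDepth : (wheel c k).IsPotential wheelDepth := by
  refine isPotential_iff.mpr fun e => ?_
  match e with
  | .copy i e | .spoke i => simp [wheel, wheelDepth]
  | .arm i s true j | .arm i s false j | .link i =>
    simp only [wheel, wheelDepth_armVertex, Fin.val_succ, Fin.val_castSucc, Fin.val_last,
      reduceCtorEq, false_implies, and_true]
    omega

theorem ecc_wheel_center (hG : G.StronglyConnected) (hc : G.ecc c ≤ k) :
    (wheel c k).ecc .center = k + 1 := by
  refine le_antisymm (ecc_wheel_center_le hG hc) ?_
  have htip := isPotential_wheelDepth.le_add_dist (stronglyConnected_wheel (c := c) (k := k) hG)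
    .center (armVertex c k 0 true (Fin.last k))
  rw [wheelDepth_armVertex] at htip
  refine le_trans ?_ (dist_le_ecc _ (armVertex c k 0 true (Fin.last k)))
  simp only [wheelDepth, Fin.val_last] at htip
  omega

/-! ### Orientations of wheels -/

/-- The function on the wheel equal to `0` at the centre, to `h i + ψ i` on the `i`-th copy of `G`,
and changing at unit speed along the arms, starting from `h i` at the `i`-th hub. -/
def wheelPotential (h : Fin 3 → ℤ) (ψ : Fin 3 → G.V → ℤ) : WheelVertex G.V k → ℤ
  | .center => 0
  | .copy i v => h i + ψ i v
  | .arm i true j => h i + (j + 1)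
  | .arm i false j => h i - (j + 1)

theorem wheelPotential_armVertex {h : Fin 3 → ℤ} {ψ : Fin 3 → G.V → ℤ} (hψ : ∀ i, ψ i c = 0)
    (i : Fin 3) (s : Bool) (m : Fin (k + 1)) :
    wheelPotential h ψ (armVertex c k i s m) = if s then h i + m else h i - m := by
  cases m using Fin.cases <;> cases s <;> simp [armVertex, wheelPotential, hψ]

/-- The conditions on values `h i` at the hubs under which they extend to a potential that
vanishes at the centre; `o.flip (.spoke i) = false` says that the `i`-th spoke points away from the
centre. -/
structure IsHubPotential (o : (wheel c k).Orientation) (h : Fin 3 → ℤ) : Prop where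
  link : ∀ i, h (i + 1) ≤ h i + (2 * k + 1)
  outward : ∀ i, o.flip (.spoke i) = false → h i ≤ 1
  inward : ∀ i, o.flip (.spoke i) = true → -1 ≤ h i

variable {o : (wheel c k).Orientation} {h : Fin 3 → ℤ}

theorem IsHubPotential.isPotential (hh : IsHubPotential o h) {ψ : Fin 3 → G.V → ℤ}
    (hψ : ∀ i, (o.comap (wheelCopy c k i)).graph.IsPotential (ψ i)) (hψc : ∀ i, ψ i c = 0) :
    o.graph.IsPotential (wheelPotential h ψ) := by
  refine o.isPotential_graph_iff.mpr fun e => ?_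
  match e with
  | .copy i e =>
    simpa [wheel, wheelPotential, wheelCopy, Orientation.comap, add_assoc] using
      (Orientation.isPotential_graph_iff _).mp (hψ i) e
  | .spoke i =>
    have hout := hh.outward i
    have hin := hh.inward i
    simp only [wheel, wheelPotential, hψc, add_zero, zero_add]
    exact ⟨hout, fun hi => by have := hin hi; omega⟩
  | .link i =>
    have hlink := hh.link i
    have hflip : o.flip (.link i) = false := o.flip_dir _ rfl
    simp only [wheel, wheelPotential_armVertex hψc, hflip, Fin.val_last, reduceIte, reduceCtorEq,
      false_implies, true_implies, and_true]
    omega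
  | .arm i s away j =>
    have hflip : o.flip (.arm i s away j) = false := o.flip_dir _ rfl
    cases s <;> cases away <;> simp [wheel, wheelPotential_armVertex hψc, hflip] <;> omega

theorem IsHubPotential.add_dist_from_le (hh : IsHubPotential o h)
    (ho : o.graph.StronglyConnected) (i : Fin 3) (v : G.V) :
    h i + (o.comap (wheelCopy c k i)).graph.dist c v ≤
      o.graph.dist WheelVertex.center (WheelVertex.copy i v) := by
  have hcopy i := (isRetraction_wheelRetract i).stronglyConnected_comap ho
  have hφ := hh.isPotential (fun i => (hcopy i).isPotential_dist_from c)
    fun _ => Int.natCast_eq_zero.mpr (dist_self _)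
  have := hφ.le_add_dist ho WheelVertex.center (WheelVertex.copy i v)
  simpa [wheelPotential] using this

theorem IsHubPotential.neg_add_dist_to_le (hh : IsHubPotential o h)
    (ho : o.graph.StronglyConnected) (i : Fin 3) (v : G.V) :
    -h i + (o.comap (wheelCopy c k i)).graph.dist v c ≤
      o.graph.dist (WheelVertex.copy i v) WheelVertex.center := by
  have hcopy i := (isRetraction_wheelRetract i).stronglyConnected_comap ho
  have hφ := hh.isPotential (fun i => (hcopy i).isPotential_neg_dist_to c)
    fun _ => neg_eq_zero.mpr (Int.natCast_eq_zero.mpr (dist_self _))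
  have := hφ.le_add_dist ho (WheelVertex.copy i v) WheelVertex.center
  simp only [wheelPotential] at this
  omega

-- If all spokes pointed away from the centre, arbitrarily small constants would be admissible at
-- the hubs, so the hubs would be arbitrarily far from the centre.
theorem exists_spoke_inward (ho : o.graph.StronglyConnected) :
    ∃ i, o.flip (.spoke i) = true := by
  by_contra! hall
  have hh (n : ℕ) : IsHubPotential o fun _ => -(n : ℤ) :=
    ⟨fun _ => by omega, fun _ _ => by omega, fun i hi => absurd hi (hall i)⟩
  have := (hh (o.graph.dist (WheelVertex.copy 0 c) WheelVertex.center + 1)).neg_add_dist_to_le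
    ho 0 c
  omega

theorem exists_spoke_outward (ho : o.graph.StronglyConnected) :
    ∃ i, o.flip (.spoke i) = false := by
  by_contra! hall
  have hh (n : ℕ) : IsHubPotential o fun _ => (n : ℤ) :=
    ⟨fun _ => by omega, fun i hi => absurd hi (hall i), fun _ _ => by omega⟩
  have := (hh (o.graph.dist WheelVertex.center (WheelVertex.copy 0 c) + 1)).add_dist_from_le
    ho 0 c
  omega

theorem isHubPotential_rotate {i : Fin 3}
    (hlink : ∀ m, h (m + 1) ≤ h m + (2 * k + 1))
    (houtward : ∀ m, o.flip (.spoke (i + m)) = false → h m ≤ 1)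
    (hinward : ∀ m, o.flip (.spoke (i + m)) = true → -1 ≤ h m) :
    IsHubPotential o fun j => h (j - i) where
  link j := by simpa only [add_sub_right_comm] using hlink (j - i)
  outward j hj := houtward (j - i) (by rwa [add_sub_cancel])
  inward j hj := hinward (j - i) (by rwa [add_sub_cancel])

theorem isHubPotential_of_inward {i : Fin 3} (hi : o.flip (.spoke i) = true) :
    IsHubPotential o fun j => ![2 * (k : ℤ) + 2, 1, 1] (j - i) :=
  isHubPotential_rotate
    (fun m => by fin_cases m <;> simp <;> omega)
    (fun m hm => by fin_cases m <;> simp_all)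
    (fun m _ => by fin_cases m <;> simp; omega)

theorem isHubPotential_of_outward {i : Fin 3} (hi : o.flip (.spoke i) = false) :
    IsHubPotential o fun j => ![-(2 * (k : ℤ) + 2), -1, -1] (j - i) :=
  isHubPotential_rotate
    (fun m => by fin_cases m <;> simp <;> omega)
    (fun m _ => by fin_cases m <;> simp; omega)
    (fun m hm => by fin_cases m <;> simp_all)

theorem isHubPotential_of_inward_of_inward {i : Fin 3} (hi : o.flip (.spoke i) = true)
    (hnext : o.flip (.spoke (i + 1)) = true) :
    IsHubPotential o fun j => ![2 * (k : ℤ) + 2, 4 * k + 3, 1] (j - i) :=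
  isHubPotential_rotate
    (fun m => by fin_cases m <;> simp <;> omega)
    (fun m hm => by fin_cases m <;> simp_all)
    (fun m _ => by fin_cases m <;> simp <;> omega)

theorem isHubPotential_of_outward_of_outward {i : Fin 3} (hi : o.flip (.spoke i) = false)
    (hnext : o.flip (.spoke (i + 1)) = false) :
    IsHubPotential o fun j => ![-(4 * (k : ℤ) + 3), -(2 * k + 2), -1] (j - i) :=
  isHubPotential_rotate
    (fun m => by fin_cases m <;> simp <;> omega)
    (fun m _ => by fin_cases m <;> simp <;> omega)
    (fun m hm => by fin_cases m <;> simp_all)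

theorem exists_add_le_dist_center_from (ho : o.graph.StronglyConnected) {n : ℕ}
    (hn : ∀ i, ∃ v, n ≤ (o.comap (wheelCopy c k i)).graph.dist c v) :
    ∃ x, n + (2 * k + 2) ≤ o.graph.dist WheelVertex.center x := by
  obtain ⟨i, hi⟩ := exists_spoke_inward ho
  obtain ⟨v, hv⟩ := hn i
  have := (isHubPotential_of_inward hi).add_dist_from_le ho i v
  simp only [sub_self, Matrix.cons_val_zero] at this
  exact ⟨WheelVertex.copy i v, by omega⟩

theorem exists_add_le_dist_center_to (ho : o.graph.StronglyConnected) {n : ℕ}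
    (hn : ∀ i, ∃ v, n ≤ (o.comap (wheelCopy c k i)).graph.dist v c) :
    ∃ x, n + (2 * k + 2) ≤ o.graph.dist x WheelVertex.center := by
  obtain ⟨i, hi⟩ := exists_spoke_outward ho
  obtain ⟨v, hv⟩ := hn i
  have := (isHubPotential_of_outward hi).neg_add_dist_to_le ho i v
  simp only [sub_self, Matrix.cons_val_zero] at this
  exact ⟨WheelVertex.copy i v, by omega⟩

theorem exists_apply_eq_apply_add_one (f : Fin 3 → Bool) : ∃ i, f i = f (i + 1) := by
  revert f
  decide

theorem add_le_ecc_wheel_center (ho : o.graph.StronglyConnected) {n : ℕ}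
    (hfrom : ∀ i, ∃ v, n ≤ (o.comap (wheelCopy c k i)).graph.dist c v)
    (hto : ∀ i, ∃ v, n ≤ (o.comap (wheelCopy c k i)).graph.dist v c) :
    n + (4 * k + 3) ≤ o.graph.ecc WheelVertex.center := by
  obtain ⟨i, hi⟩ := exists_apply_eq_apply_add_one fun i => o.flip (.spoke i)
  cases hflip : o.flip (.spoke i) with
  | true =>
    obtain ⟨v, hv⟩ := hfrom (i + 1)
    have hdist := (isHubPotential_of_inward_of_inward hflip (hi ▸ hflip)).add_dist_from_le
      ho (i + 1) v
    simp only [add_sub_cancel_left, Matrix.cons_val_one, Matrix.cons_val_zero] at hdist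
    have hfar : n + (4 * k + 3) ≤ o.graph.dist WheelVertex.center (WheelVertex.copy (i + 1) v) := by
      omega
    exact hfar.trans (dist_le_ecc _ _)
  | false =>
    obtain ⟨v, hv⟩ := hto i
    have hdist := (isHubPotential_of_outward_of_outward hflip (hi ▸ hflip)).neg_add_dist_to_le
      ho i v
    simp only [sub_self, Matrix.cons_val_zero] at hdist
    have hfar : n + (4 * k + 3) ≤ o.graph.dist (WheelVertex.copy i v) WheelVertex.center := by
      omega
    exact hfar.trans (dist_le_ecc' _ _)

end Wheel

/-! ### Nested wheels -/

/-- The `r`-fold iterated wheel with its centre, starting from a single vertex; the arms of the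
`(r + 1)`-st wheel have length `r`. -/
def nestedWheel : ℕ → (G : MixedMultigraph) × G.V
  | 0 => ⟨{ V := Unit, E := Empty, src := Empty.elim, dst := Empty.elim, directed := Empty.elim },
      ()⟩
  | r + 1 => ⟨wheel (nestedWheel r).2 r, .center⟩

theorem stronglyConnected_nestedWheel : ∀ r, (nestedWheel r).1.StronglyConnected
  | 0 => fun u _ => Reachable.refl u
  | r + 1 => stronglyConnected_wheel (stronglyConnected_nestedWheel r)

theorem bridgeless_nestedWheel : ∀ r, (nestedWheel r).1.Bridgeless
  | 0 => fun e => e.elim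
  | r + 1 => bridgeless_wheel (stronglyConnected_nestedWheel r) (bridgeless_nestedWheel r)

theorem ecc_nestedWheel : ∀ r, (nestedWheel r).1.ecc (nestedWheel r).2 = r
  | 0 => Nat.le_zero.mp (ecc_le fun v => ⟨(dist_self v).le, (dist_self v).le⟩)
  | r + 1 => ecc_wheel_center (stronglyConnected_nestedWheel r) (ecc_nestedWheel r).le

theorem exists_le_dist_nestedWheel (r : ℕ) (o : (nestedWheel r).1.Orientation)
    (ho : o.graph.StronglyConnected) :
    (∃ x, r ^ 2 + r ≤ o.graph.dist (nestedWheel r).2 x) ∧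
      ∃ x, r ^ 2 + r ≤ o.graph.dist x (nestedWheel r).2 := by
  induction r with
  | zero => exact ⟨⟨(), by simp⟩, ⟨(), by simp⟩⟩
  | succ r ih =>
    have hcopy i := ih _ ((isRetraction_wheelRetract i).stronglyConnected_comap ho)
    obtain ⟨x, hx⟩ := exists_add_le_dist_center_from ho fun i => (hcopy i).1
    obtain ⟨y, hy⟩ := exists_add_le_dist_center_to ho fun i => (hcopy i).2
    have hsq : (r + 1) ^ 2 + (r + 1) = r ^ 2 + r + (2 * r + 2) := by ring
    exact ⟨⟨x, hsq ▸ hx⟩, ⟨y, hsq ▸ hy⟩⟩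

theorem le_ecc_orientation_nestedWheel {r : ℕ} (hr : 1 ≤ r)
    {o : (nestedWheel r).1.Orientation} (ho : o.graph.StronglyConnected) :
    r ^ 2 + 3 * r - 1 ≤ o.graph.ecc (nestedWheel r).2 := by
  obtain ⟨r, rfl⟩ := Nat.exists_eq_add_of_le' hr
  have hcopy i := exists_le_dist_nestedWheel r _
    ((isRetraction_wheelRetract i).stronglyConnected_comap ho)
  have hecc := add_le_ecc_wheel_center ho (fun i => (hcopy i).1) (fun i => (hcopy i).2)
  have hsq : (r + 1) ^ 2 + 3 * (r + 1) - 1 = r ^ 2 + r + (4 * r + 3) := by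
    rw [show (r + 1) ^ 2 + 3 * (r + 1) = r ^ 2 + r + (4 * r + 3) + 1 by ring, Nat.add_sub_cancel]
  exact hsq ▸ hecc

end MixedMultigraph

open MixedMultigraph in
/-- for every `r ≥ 1` there is a strongly connected bridgeless
mixed multigraph of radius `r` all of whose strongly connected orientations
have radius at least `r² + 3r − 1`. -/
theorem oriented_radius_lower_bound (r : ℕ) (hr : 1 ≤ r) :
    ∃ G : MixedMultigraph, G.StronglyConnected ∧ G.Bridgeless ∧ G.radius = r ∧
      ∀ o : G.Orientation, o.graph.StronglyConnected →
        r ^ 2 + 3 * r - 1 ≤ o.graph.radius := by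
  have hconnected := stronglyConnected_nestedWheel r
  refine ⟨bouquet Bool (nestedWheel r).2, stronglyConnected_bouquet hconnected,
    bridgeless_bouquet hconnected (bridgeless_nestedWheel r),
    (radius_bouquet hconnected).trans (ecc_nestedWheel r), fun o ho => ?_⟩
  exact le_radius_orientation_bouquet ho fun b =>
    le_ecc_orientation_nestedWheel hr ((isRetraction_petalRetract b).stronglyConnected_comap ho)
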